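/- Let θ ≥ 0, Σ : ℝ² → M₂(ℝ) continuous, T > 0, v : [0,T] → ℝ² continuous, and let z be a classical solution on [0,T] of the tire PDE with input v. Suppose Assumption 1 holds with constant ω > 0 and Assumption 2 holds for Σ. Define V(t) := (1/2)∫₀¹ z(ξ,t)ᵀ Q(ξ) z(ξ,t) dξ and F(t) := (𝒦₁ z(·,t)). Then for every t ∈ (0,T), F(t)ᵀ v(t) ≥ V′(t) + ω ∫₀¹ ‖z(ξ,t)‖² dξ. -/

import Mathlib

open MeasureTheory Matrix Set

noncomputable section

attribute [local instance] Matrix.normedAddCommGroup Matrix.normedSpace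

abbrev Vec2 := Fin 2 → ℝ
abbrev Mat2 := Matrix (Fin 2) (Fin 2) ℝ

/-- Nondimensional pressure distribution `p̄(ξ) = (a/(1-e^{-a})) e^{-aξ}`. -/
def pbar (a ξ : ℝ) : ℝ := a / (1 - Real.exp (-a)) * Real.exp (-a * ξ)

/-- The physical parameters of the single-track tire model. -/
structure TireParams where
  vx : ℝ
  L1 : ℝ
  L2 : ℝ
  Fz1 : ℝ
  Fz2 : ℝ
  σ1 : ℝ
  σ2 : ℝ
  a1 : ℝ
  a2 : ℝ
  φ1 : ℝ
  φ2 : ℝ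
  vx_pos : 0 < vx
  L1_pos : 0 < L1
  L2_pos : 0 < L2
  Fz1_pos : 0 < Fz1
  Fz2_pos : 0 < Fz2
  σ1_pos : 0 < σ1
  σ2_pos : 0 < σ2
  a1_pos : 0 < a1
  a2_pos : 0 < a2
  φ1_mem : φ1 ∈ Set.Ioc (0:ℝ) 1
  φ2_mem : φ2 ∈ Set.Ioc (0:ℝ) 1

namespace TireParams

variable (P : TireParams)

def ψ1 : ℝ := 1 - P.φ1
def ψ2 : ℝ := 1 - P.φ2

def Λmat : Mat2 := Matrix.diagonal ![P.vx / P.L1, P.vx / P.L2]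

def Hmat : Mat2 := (2:ℝ) • Matrix.diagonal ![P.φ1, P.φ2]

def K1 (ξ : ℝ) : Mat2 :=
  Matrix.diagonal ![P.Fz1 * P.σ1 * pbar P.a1 ξ, P.Fz2 * P.σ2 * pbar P.a2 ξ]

def K2 (ξ : ℝ) : Mat2 :=
  -Matrix.diagonal ![P.ψ1 * pbar P.a1 ξ, P.ψ2 * pbar P.a2 ξ]

def K3 (ξ : ℝ) : Mat2 :=
  -P.vx • Matrix.diagonal ![P.ψ1 / P.L1 * deriv (pbar P.a1) ξ, P.ψ2 / P.L2 * deriv (pbar P.a2) ξ]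

def K4 : Mat2 :=
  P.vx • Matrix.diagonal ![P.ψ1 / P.L1 * pbar P.a1 1, P.ψ2 / P.L2 * pbar P.a2 1]

def Q (ξ : ℝ) : Mat2 := P.K1 ξ * (P.Hmat)⁻¹

/-- `(𝒦ζ) = ∫₀¹ K(ξ) ζ(ξ) dξ`. -/
def Kop (K : ℝ → Mat2) (ζ : ℝ → Vec2) : Vec2 := ∫ ξ in (0:ℝ)..1, (K ξ).mulVec (ζ ξ)

def K1op (ζ : ℝ → Vec2) : Vec2 := Kop P.K1 ζ

def K2op (ζ : ℝ → Vec2) : Vec2 := Kop P.K2 ζ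

/-- `(𝒦₃ζ) = ∫₀¹ K₃(ξ)ζ(ξ)dξ + K₄ ζ(1)`. -/
def K3op (ζ : ℝ → Vec2) : Vec2 := Kop P.K3 ζ + (P.K4).mulVec (ζ 1)

/-- `(𝒜ζ)(ξ) = -Λ ζ'(ξ) + (𝒦₃ζ)`, expressed through a given derivative `ζ'`. -/
def Aop (ζ ζ' : ℝ → Vec2) (ξ : ℝ) : Vec2 := -(P.Λmat).mulVec (ζ' ξ) + P.K3op ζ

end TireParams

/-- `ζ` is C¹ on `[0,1]` with derivative `ζ'`. -/
def IsC1On01 (ζ ζ' : ℝ → Vec2) : Prop :=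
  (∀ ξ ∈ Icc (0:ℝ) 1, HasDerivWithinAt ζ (ζ' ξ) (Icc (0:ℝ) 1) ξ) ∧
    ContinuousOn ζ' (Icc (0:ℝ) 1)

/-- Square integrability on `(0,1)`. -/
def SqIntegrableOn01 (ζ : ℝ → Vec2) : Prop :=
  Measurable ζ ∧ IntervalIntegrable (fun ξ => ∑ i, (ζ ξ i) ^ 2) volume 0 1

/-- Assumption 1 (strict dissipativity of `𝒜`). -/
def Assumption1 (P : TireParams) (ω : ℝ) : Prop :=
  ∀ ζ ζ' : ℝ → Vec2, IsC1On01 ζ ζ' → ζ 0 = 0 →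
    (∫ ξ in (0:ℝ)..1, P.Aop ζ ζ' ξ ⬝ᵥ (P.Q ξ).mulVec (ζ ξ)) ≤
      -ω * ∫ ξ in (0:ℝ)..1, ∑ i, (ζ ξ i) ^ 2

/-- Assumption 2 (dissipativity of the source `Σ`). -/
def Assumption2 (P : TireParams) (S : Vec2 → Mat2) : Prop :=
  ∀ y : Vec2, ∀ ζ : ℝ → Vec2, SqIntegrableOn01 ζ →
    (∫ ξ in (0:ℝ)..1, ζ ξ ⬝ᵥ (P.Q ξ).mulVec ((S y).mulVec (ζ ξ + P.K2op ζ))) ≤ 0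

/-- `z` (with partial derivatives `zξ`, `zt`) is a classical solution on `[0,T]` of the tire
PDE with input `v`: `∂z/∂t + Λ ∂z/∂ξ = θΣ(v(t))[z + 𝒦₂z] + 𝒦₃z + Hv(t)`, `z(0,t) = 0`. -/
def IsClassicalSolution (P : TireParams) (θ : ℝ) (S : Vec2 → Mat2) (T : ℝ)
    (v : ℝ → Vec2) (z zξ zt : ℝ → ℝ → Vec2) : Prop :=
  (∀ t ∈ Icc (0:ℝ) T, ∀ ξ ∈ Icc (0:ℝ) 1,
      HasDerivWithinAt (fun s => z s t) (zξ ξ t) (Icc (0:ℝ) 1) ξ) ∧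
  (∀ ξ ∈ Icc (0:ℝ) 1, ∀ t ∈ Icc (0:ℝ) T,
      HasDerivWithinAt (fun s => z ξ s) (zt ξ t) (Icc (0:ℝ) T) t) ∧
  ContinuousOn (fun p : ℝ × ℝ => z p.1 p.2) (Icc (0:ℝ) 1 ×ˢ Icc (0:ℝ) T) ∧
  ContinuousOn (fun p : ℝ × ℝ => zξ p.1 p.2) (Icc (0:ℝ) 1 ×ˢ Icc (0:ℝ) T) ∧
  ContinuousOn (fun p : ℝ × ℝ => zt p.1 p.2) (Icc (0:ℝ) 1 ×ˢ Icc (0:ℝ) T) ∧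
  (∀ ξ ∈ Ioo (0:ℝ) 1, ∀ t ∈ Ioo (0:ℝ) T,
      zt ξ t + (P.Λmat).mulVec (zξ ξ t) =
        θ • (S (v t)).mulVec (z ξ t + P.K2op (fun s => z s t)) +
          P.K3op (fun s => z s t) + (P.Hmat).mulVec (v t)) ∧
  (∀ t ∈ Icc (0:ℝ) T, z 0 t = 0)

/-- The storage function `V(t) = ½∫₀¹ z(ξ,t)ᵀ Q(ξ) z(ξ,t) dξ`. -/
def storage (P : TireParams) (z : ℝ → ℝ → Vec2) (t : ℝ) : ℝ :=
  (1/2) * ∫ ξ in (0:ℝ)..1, z ξ t ⬝ᵥ (P.Q ξ).mulVec (z ξ t)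

/-- The output `F(t) = (𝒦₁ z(·,t))`. -/
def outputF (P : TireParams) (z : ℝ → ℝ → Vec2) (t : ℝ) : Vec2 :=
  P.K1op (fun s => z s t)

theorem continuous_pbar (a : ℝ) : Continuous (pbar a) := by
  unfold pbar; fun_prop

/-- Diagonal entries of `Q`. -/
def qd (P : TireParams) (ξ : ℝ) : Vec2 :=
  ![P.Fz1 * P.σ1 * pbar P.a1 ξ / (2 * P.φ1), P.Fz2 * P.σ2 * pbar P.a2 ξ / (2 * P.φ2)]

theorem Hinv (P : TireParams) :
    (P.Hmat)⁻¹ = Matrix.diagonal ![1 / (2 * P.φ1), 1 / (2 * P.φ2)] := by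
  have e1 := P.φ1_mem.1.ne'
  have e2 := P.φ2_mem.1.ne'
  apply Matrix.inv_eq_right_inv
  ext i j
  fin_cases i <;> fin_cases j <;> simp [TireParams.Hmat] <;> field_simp

theorem Q_eq (P : TireParams) (ξ : ℝ) : P.Q ξ = Matrix.diagonal (qd P ξ) := by
  unfold TireParams.Q
  rw [Hinv, TireParams.K1, Matrix.diagonal_mul_diagonal]
  congr 1
  ext i
  fin_cases i <;> simp [qd] <;> ring

theorem continuous_qd (P : TireParams) : Continuous (qd P) := by
  have h1 := continuous_pbar P.a1
  have h2 := continuous_pbar P.a2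
  refine continuous_pi fun i => ?_
  fin_cases i <;> simp [qd] <;> fun_prop

theorem continuous_Q (P : TireParams) : Continuous P.Q := by
  have : P.Q = fun ξ => Matrix.diagonal (qd P ξ) := funext (Q_eq P)
  rw [this]
  exact (continuous_qd P).matrix_diagonal

theorem continuous_K1 (P : TireParams) : Continuous P.K1 := by
  have h1 := continuous_pbar P.a1
  have h2 := continuous_pbar P.a2
  unfold TireParams.K1
  refine Continuous.matrix_diagonal (continuous_pi fun i => ?_)
  fin_cases i <;> simp <;> fun_prop

theorem dotQ (P : TireParams) (ξ : ℝ) (a b : Vec2) :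
    a ⬝ᵥ (P.Q ξ).mulVec b = qd P ξ 0 * a 0 * b 0 + qd P ξ 1 * a 1 * b 1 := by
  rw [Q_eq]
  simp [dotProduct, Matrix.mulVec_diagonal]
  ring

theorem dotHQ (P : TireParams) (ξ : ℝ) (a b : Vec2) :
    (P.Hmat).mulVec a ⬝ᵥ (P.Q ξ).mulVec b = (P.K1 ξ).mulVec b ⬝ᵥ a := by
  have e1 := P.φ1_mem.1.ne'
  have e2 := P.φ2_mem.1.ne'
  rw [dotQ]
  simp [dotProduct, TireParams.K1, TireParams.Hmat, Matrix.smul_mulVec, Matrix.mulVec_diagonal, qd]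
  field_simp

/-- Integrals over `[0,1]` only see values there. -/
theorem Kop_congr (K : ℝ → Mat2) (f g : ℝ → Vec2) (h : ∀ ξ ∈ Icc (0:ℝ) 1, f ξ = g ξ) :
    TireParams.Kop K f = TireParams.Kop K g := by
  unfold TireParams.Kop
  apply intervalIntegral.integral_congr
  intro ξ hξ
  rw [uIcc_of_le zero_le_one] at hξ
  simp only [h ξ hξ]

theorem ext_cont (f : ℝ → Vec2) (h : ContinuousOn f (Icc (0:ℝ) 1)) :
    ∃ g : ℝ → Vec2, Continuous g ∧ ∀ ξ ∈ Icc (0:ℝ) 1, f ξ = g ξ := by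
  refine ⟨IccExtend zero_le_one ((Icc (0:ℝ) 1).domRestrict f), ?_, ?_⟩
  · exact (continuousOn_iff_continuous_domRestrict.1 h).Icc_extend'
  · intro ξ hξ
    rw [IccExtend_of_mem _ _ hξ]; rfl

theorem storage_hasDerivAt (P : TireParams) (T : ℝ) (z zt : ℝ → ℝ → Vec2)
    (hd : ∀ ξ ∈ Icc (0:ℝ) 1, ∀ t ∈ Icc (0:ℝ) T,
      HasDerivWithinAt (fun s => z ξ s) (zt ξ t) (Icc (0:ℝ) T) t)
    (hzc : ContinuousOn (fun p : ℝ × ℝ => z p.1 p.2) (Icc (0:ℝ) 1 ×ˢ Icc (0:ℝ) T))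
    (htc : ContinuousOn (fun p : ℝ × ℝ => zt p.1 p.2) (Icc (0:ℝ) 1 ×ˢ Icc (0:ℝ) T))
    (t : ℝ) (ht : t ∈ Ioo (0:ℝ) T) :
    HasDerivAt (storage P z) (∫ ξ in (0:ℝ)..1, zt ξ t ⬝ᵥ (P.Q ξ).mulVec (z ξ t)) t := by
  have hq := continuous_qd P
  have hq0 : Continuous fun ξ => qd P ξ 0 := (continuous_apply 0).comp hq
  have hq1 : Continuous fun ξ => qd P ξ 1 := (continuous_apply 1).comp hq
  have hzi : ∀ i, ContinuousOn (fun p : ℝ × ℝ => z p.1 p.2 i) (Icc (0:ℝ) 1 ×ˢ Icc (0:ℝ) T) :=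
    fun i => (continuous_apply i).comp_continuousOn hzc
  have hti : ∀ i, ContinuousOn (fun p : ℝ × ℝ => zt p.1 p.2 i) (Icc (0:ℝ) 1 ×ˢ Icc (0:ℝ) T) :=
    fun i => (continuous_apply i).comp_continuousOn htc
  have hF : ContinuousOn (fun p : ℝ × ℝ => z p.1 p.2 ⬝ᵥ (P.Q p.1).mulVec (z p.1 p.2))
      (Icc (0:ℝ) 1 ×ˢ Icc (0:ℝ) T) := by
    simp only [dotQ]
    have a0 := hzi 0
    have a1 := hzi 1
    exact (((hq0.comp continuous_fst).continuousOn.mul a0).mul a0).add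
      (((hq1.comp continuous_fst).continuousOn.mul a1).mul a1)
  have hF' : ContinuousOn (fun p : ℝ × ℝ => 2 * (zt p.1 p.2 ⬝ᵥ (P.Q p.1).mulVec (z p.1 p.2)))
      (Icc (0:ℝ) 1 ×ˢ Icc (0:ℝ) T) := by
    simp only [dotQ]
    exact continuousOn_const.mul
      ((((hq0.comp continuous_fst).continuousOn.mul (hti 0)).mul (hzi 0)).add
      (((hq1.comp continuous_fst).continuousOn.mul (hti 1)).mul (hzi 1)))
  obtain ⟨C, hC⟩ := (isCompact_Icc.prod isCompact_Icc).exists_bound_of_continuousOn hF'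
  have slice : ∀ f : ℝ × ℝ → ℝ, ContinuousOn f (Icc (0:ℝ) 1 ×ˢ Icc (0:ℝ) T) →
      ∀ s ∈ Icc (0:ℝ) T, IntervalIntegrable (fun ξ => f (ξ, s)) volume 0 1 := by
    intro f hf s hs
    apply ContinuousOn.intervalIntegrable
    rw [uIcc_of_le zero_le_one]
    exact hf.comp (by fun_prop) (fun ξ hξ => ⟨hξ, hs⟩)
  have key := intervalIntegral.hasDerivAt_integral_of_dominated_loc_of_deriv_le
    (μ := volume) (a := 0) (b := 1) (𝕜 := ℝ)
    (F := fun s ξ => z ξ s ⬝ᵥ (P.Q ξ).mulVec (z ξ s))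
    (F' := fun s ξ => 2 * (zt ξ s ⬝ᵥ (P.Q ξ).mulVec (z ξ s)))
    (x₀ := t) (s := Ioo 0 T) (bound := fun _ => C) (Ioo_mem_nhds ht.1 ht.2)
    (by
      filter_upwards [Ioo_mem_nhds ht.1 ht.2] with s hs
      exact (slice _ hF s (Ioo_subset_Icc_self hs)).def'.aestronglyMeasurable)
    (slice _ hF t (Ioo_subset_Icc_self ht))
    ((slice _ hF' t (Ioo_subset_Icc_self ht)).def'.aestronglyMeasurable)
    (by
      refine Filter.Eventually.of_forall fun ξ hξ s hs => ?_
      rw [uIoc_of_le zero_le_one] at hξ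
      exact hC (ξ, s) ⟨Ioc_subset_Icc_self hξ, Ioo_subset_Icc_self hs⟩)
    (by simp)
    (by
      refine Filter.Eventually.of_forall fun ξ hξ s hs => ?_
      rw [uIoc_of_le zero_le_one] at hξ
      have h0 := (hd ξ (Ioc_subset_Icc_self hξ) s (Ioo_subset_Icc_self hs)).hasDerivAt
        (Icc_mem_nhds hs.1 hs.2)
      have hi := hasDerivAt_pi.1 h0
      simp only [dotQ]
      have a0 := hi 0
      have a1 := hi 1
      refine HasDerivAt.congr_deriv
        (((a0.const_mul (qd P ξ 0)).mul a0).add ((a1.const_mul (qd P ξ 1)).mul a1)) ?_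
      ring)
  have k2 := key.2.const_mul (1/2 : ℝ)
  rw [intervalIntegral.integral_const_mul] at k2
  refine HasDerivAt.congr_deriv k2 ?_
  ring

/-- along classical solutions, under Assumptions 1 and 2,
`F(t)ᵀ v(t) ≥ V'(t) + ω ∫₀¹ ‖z(ξ,t)‖² dξ` for every `t ∈ (0,T)`. -/
theorem statement2 (P : TireParams) (θ : ℝ) (hθ : 0 ≤ θ)
    (S : Vec2 → Mat2) (hS : Continuous S)
    (T : ℝ) (hT : 0 < T) (v : ℝ → Vec2) (hv : ContinuousOn v (Icc (0:ℝ) T))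
    (z zξ zt : ℝ → ℝ → Vec2) (hz : IsClassicalSolution P θ S T v z zξ zt)
    (ω : ℝ) (hω : 0 < ω) (h1 : Assumption1 P ω) (h2 : Assumption2 P S) :
    ∀ t ∈ Ioo (0:ℝ) T,
      outputF P z t ⬝ᵥ v t ≥
        deriv (storage P z) t + ω * ∫ ξ in (0:ℝ)..1, ∑ i, (z ξ t i) ^ 2 := by
  intro t ht
  obtain ⟨hdx, hdt, hzc, hxc, htc, hpde, hbc⟩ := hz
  have htI := Ioo_subset_Icc_self ht
  rw [(storage_hasDerivAt P T z zt hdt hzc htc t ht).deriv]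
  have sl : ContinuousOn (fun ξ : ℝ => (ξ, t)) (Icc (0:ℝ) 1) := by fun_prop
  have ms : MapsTo (fun ξ : ℝ => (ξ, t)) (Icc (0:ℝ) 1) (Icc (0:ℝ) 1 ×ˢ Icc (0:ℝ) T) :=
    fun ξ hξ => ⟨hξ, htI⟩
  obtain ⟨w, hw, ew⟩ := ext_cont (fun ξ => z ξ t) (hzc.comp sl ms)
  obtain ⟨wx, hwx, ewx⟩ := ext_cont (fun ξ => zξ ξ t) (hxc.comp sl ms)
  have cQ := continuous_Q P
  have cK1 := continuous_K1 P
  have k2 : P.K2op (fun s => z s t) = P.K2op w := Kop_congr _ _ _ ew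
  have k3 : P.K3op (fun s => z s t) = P.K3op w := by
    unfold TireParams.K3op
    rw [Kop_congr _ _ _ ew]
    simp only [ew 1 (right_mem_Icc.2 zero_le_one)]
  have hF : outputF P z t = P.K1op w := Kop_congr _ _ _ ew
  have hN : (∫ ξ in (0:ℝ)..1, ∑ i, (z ξ t i) ^ 2) = ∫ ξ in (0:ℝ)..1, ∑ i, (w ξ i) ^ 2 := by
    apply intervalIntegral.integral_congr
    intro ξ hξ
    rw [uIcc_of_le zero_le_one] at hξ
    simp only [ew ξ hξ]
  have hA := h1 w wx ⟨fun ξ hξ => by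
      have := (hdx t htI ξ hξ)
      rw [ewx ξ hξ] at this
      exact this.congr (fun y hy => (ew y hy).symm) (ew ξ hξ).symm, hwx.continuousOn⟩
    (by rw [← ew 0 (by simp)]; exact hbc t htI)
  have hB := h2 (v t) w ⟨hw.measurable, by
    apply Continuous.intervalIntegrable
    fun_prop⟩
  have cA : Continuous fun ξ => P.Aop w wx ξ ⬝ᵥ (P.Q ξ).mulVec (w ξ) := by
    refine Continuous.dotProduct ?_ (cQ.matrix_mulVec hw)
    exact ((continuous_const.matrix_mulVec hwx).neg).add continuous_const
  have cB : Continuous fun ξ =>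
      w ξ ⬝ᵥ (P.Q ξ).mulVec ((S (v t)).mulVec (w ξ + P.K2op w)) :=
    hw.dotProduct (cQ.matrix_mulVec (continuous_const.matrix_mulVec (hw.add continuous_const)))
  have cK : Continuous fun ξ => (P.K1 ξ).mulVec (w ξ) := cK1.matrix_mulVec hw
  have cC : Continuous fun ξ => (P.K1 ξ).mulVec (w ξ) ⬝ᵥ v t := cK.dotProduct continuous_const
  have hC : (∫ ξ in (0:ℝ)..1, (P.K1 ξ).mulVec (w ξ) ⬝ᵥ v t) = P.K1op w ⬝ᵥ v t := by
    let Lm : Vec2 →ₗ[ℝ] ℝ :=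
      { toFun := fun a => a ⬝ᵥ v t
        map_add' := fun a b => add_dotProduct a b _
        map_smul' := fun c a => smul_dotProduct c a _ }
    exact (LinearMap.toContinuousLinearMap Lm).intervalIntegral_comp_comm
      (cK.intervalIntegrable 0 1)
  have hD : (∫ ξ in (0:ℝ)..1, zt ξ t ⬝ᵥ (P.Q ξ).mulVec (z ξ t)) =
      ∫ ξ in (0:ℝ)..1, (P.Aop w wx ξ ⬝ᵥ (P.Q ξ).mulVec (w ξ) +
        θ * (w ξ ⬝ᵥ (P.Q ξ).mulVec ((S (v t)).mulVec (w ξ + P.K2op w))) +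
        (P.K1 ξ).mulVec (w ξ) ⬝ᵥ v t) := by
    apply intervalIntegral.integral_congr_ae
    have hne : ∀ᵐ ξ : ℝ ∂volume, ξ ≠ 1 := by
      simp [ae_iff]
    filter_upwards [hne] with ξ h1' hξ
    rw [uIoc_of_le zero_le_one] at hξ
    have hI : ξ ∈ Icc (0:ℝ) 1 := Ioc_subset_Icc_self hξ
    have hp := hpde ξ ⟨hξ.1, lt_of_le_of_ne hξ.2 h1'⟩ t ht
    rw [k2, k3, ew ξ hI, ewx ξ hI] at hp
    have hp' : zt ξ t = P.Aop w wx ξ + θ • (S (v t)).mulVec (w ξ + P.K2op w)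
        + (P.Hmat).mulVec (v t) := by
      rw [eq_sub_of_add_eq hp]
      unfold TireParams.Aop
      abel
    rw [hp', ew ξ hI, add_dotProduct, add_dotProduct, dotHQ, smul_dotProduct, smul_eq_mul,
      dotQ P ξ (_ *ᵥ _) (w ξ), dotQ P ξ (w ξ) (_ *ᵥ _)]
    ring
  rw [hD, intervalIntegral.integral_add, intervalIntegral.integral_add,
    intervalIntegral.integral_const_mul, hC, hF, hN]
  · nlinarith [mul_nonneg hθ (neg_nonneg.2 hB)]
  · exact cA.intervalIntegrable _ _
  · exact (continuous_const.mul cB).intervalIntegrable _ _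
  · exact (cA.add (continuous_const.mul cB)).intervalIntegrable _ _
  · exact cC.intervalIntegrable _ _
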